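/- arXiv:2202.04969 — 2 statements merged into one kernel-verified Lean document; each statement's English description precedes it below -/
import Mathlib

section
/- Let f(z) = z + exp(−z). For every sequence s : ℕ → {0,1} there exists a point z in the topological frontier of Ŝ such that Re f^n(z) → −∞ as n → ∞ and, for every n ≥ 0, Im f^n(z) > 0 if s(n) = 0 and Im f^n(z) < 0 if s(n) = 1. In particular, for every itinerary there exist escaping points on the frontier of Ŝ with that itinerary. -/
/-!
The point is found together with its whole orbit, as the fixed point of a contraction on a space of
bounded sequences. Let `x (n+1) = x n - exp (-x n)`, `x 0 = -10`; this is the real part of an orbit of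
`f` on the invariant line `Im = π`, and `x n → -∞`. Let `σ n = ±1` be the sign prescribed by `s n`.
Write the desired orbit as `z n = x n + u n` with `‖u n‖ ≤ 4`. The equation `f (z n) = z (n+1)`
follows from
`u n = σ n * π * I - log (1 + (u n - u (n+1)) / exp (-x n))`.
Since `exp (-x n)` is large, the right-hand side is a contraction of the sequences in the closed ball
of radius `4` for the sup metric (`exists_fixed_seq`), so a solution exists. As the logarithm is small,
`Im z n` is close to `σ n * π`, which gives the itinerary, and `Re z n ≤ x n + 4 → -∞`.

The orbit stays in the closed strip: where `Re z ≤ -6`, an excess `|Im z| - π > 0` is at least doubled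
by `f` (`excess_doubles`), which is incompatible with `|Im z n| ≤ 4` for all `n`.

Finally the point is not interior to `Shat` (`not_mem_interior`): the derivative of `f^[n]` there has
modulus at least `2 ^ n`, while on a disc contained in `Shat` the functions `exp (I * f^[n])` are
bounded above and below uniformly in `n`, so Cauchy's estimate bounds these derivatives.
-/

open Complex Filter Topology Set

noncomputable def f : ℂ → ℂ := fun z => z + Complex.exp (-z)

def Shat : Set ℂ := {z : ℂ | ∀ n : ℕ, |((f^[n]) z).im| ≤ Real.pi}

/-- `z` has itinerary `s`: the `n`-th iterate is in the upper half-strip when `s n = 0`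
and in the lower half-strip when `s n = 1`. -/
def HasItinerary (z : ℂ) (s : ℕ → Fin 2) : Prop :=
  ∀ n : ℕ, (s n = 0 → 0 < ((f^[n]) z).im) ∧ (s n = 1 → ((f^[n]) z).im < 0)

/-! ### The reference real orbit -/

/-- The real parts of the orbit of `-10 + π * I`, which stays on the invariant line `Im = π`. -/
noncomputable def refOrbit : ℕ → ℝ
  | 0 => -10
  | n + 1 => refOrbit n - Real.exp (-refOrbit n)

lemma refOrbit_le (n : ℕ) : refOrbit n ≤ -10 - n := by
  induction n with
  | zero => simp [refOrbit]
  | succ k ih =>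
    have h1 := Real.add_one_le_exp (-refOrbit k)
    have h2 : (0 : ℝ) ≤ k := k.cast_nonneg
    simp only [refOrbit]
    push_cast
    linarith

lemma exp_refOrbit_ge (n : ℕ) : 32 ≤ Real.exp (-refOrbit n) := by
  have h1 : (10 : ℝ) ≤ -refOrbit n := by
    have := refOrbit_le n
    have h2 : (0 : ℝ) ≤ n := n.cast_nonneg
    linarith
  have h2 : (2 : ℝ) ≤ Real.exp 1 := by
    have := Real.add_one_le_exp (1 : ℝ)
    linarith
  calc (32 : ℝ) = 2 ^ 5 := by norm_num
    _ ≤ Real.exp 1 ^ 5 := by gcongr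
    _ = Real.exp 5 := by rw [← Real.exp_nat_mul]; norm_num
    _ ≤ _ := Real.exp_le_exp.2 (by linarith)

/-! ### The orbit as a fixed point -/

lemma norm_log_one_add_sub_le {v w : ℂ} (hv : ‖v‖ ≤ 1 / 4) (hw : ‖w‖ ≤ 1 / 4) :
    ‖Complex.log (1 + v) - Complex.log (1 + w)‖ ≤ 2 * ‖v - w‖ := by
  have hre : ∀ x ∈ Metric.closedBall (0 : ℂ) (1 / 4), 3 / 4 ≤ (1 + x).re := by
    intro x hx
    have h1 : ‖x‖ ≤ 1 / 4 := by simpa using hx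
    have h2 := (abs_le.1 (Complex.abs_re_le_norm x)).1
    simp only [Complex.add_re, Complex.one_re]
    linarith
  refine (convex_closedBall (0 : ℂ) (1 / 4)).norm_image_sub_le_of_norm_hasDerivWithin_le
    (f := fun x => Complex.log (1 + x)) (f' := fun x => (1 + x)⁻¹) ?_ ?_ (by simpa using hw)
    (by simpa using hv)
  · intro x hx
    have hs : (1 + x) ∈ Complex.slitPlane := Or.inl (by linarith [hre x hx])
    have := ((hasDerivAt_id x).const_add (1 : ℂ)).clog hs
    simpa using this.hasDerivWithinAt
  · intro x hx
    rw [norm_inv]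
    have h1 : 3 / 4 ≤ ‖1 + x‖ := (hre x hx).trans (Complex.re_le_norm _)
    calc ‖1 + x‖⁻¹ ≤ (3 / 4 : ℝ)⁻¹ := by gcongr
      _ ≤ 2 := by norm_num

/-- Existence of the perturbation `u` of the reference orbit with prescribed signs `σ`. -/
lemma exists_fixed_seq (σ : ℕ → ℝ) (hσ : ∀ n, |σ n| = 1) :
    ∃ u : ℕ → ℂ, (∀ n, ‖u n‖ ≤ 4) ∧ ∀ n, u n = (σ n * Real.pi : ℝ) * Complex.I -
      Complex.log (1 + (u n - u (n + 1)) / (Real.exp (-refOrbit n) : ℝ)) := by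
  set B := Metric.closedBall (0 : ℂ) 4 with hB
  have hsmall : ∀ (u : ℕ → B) (n : ℕ),
      ‖((u n : ℂ) - u (n + 1)) / (Real.exp (-refOrbit n) : ℝ)‖ ≤ 1 / 4 := by
    intro u n
    have h1 : ‖(u n : ℂ)‖ ≤ 4 := mem_closedBall_zero_iff.1 (u n).2
    have h2 : ‖(u (n + 1) : ℂ)‖ ≤ 4 := mem_closedBall_zero_iff.1 (u (n + 1)).2
    have hE := exp_refOrbit_ge n
    rw [norm_div, Complex.norm_real, Real.norm_eq_abs, abs_of_pos (Real.exp_pos _),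
      div_le_iff₀ (Real.exp_pos _)]
    have := norm_sub_le (u n : ℂ) (u (n + 1))
    linarith
  have hmem : ∀ (u : ℕ → B) (n : ℕ), (σ n * Real.pi : ℝ) * Complex.I -
      Complex.log (1 + ((u n : ℂ) - u (n + 1)) / (Real.exp (-refOrbit n) : ℝ)) ∈ B := by
    intro u n
    have h1 := hsmall u n
    have h2 := Complex.norm_log_one_add_half_le_self (h1.trans (by norm_num))
    have h3 : ‖((σ n * Real.pi : ℝ) : ℂ) * Complex.I‖ = Real.pi := by
      rw [norm_mul, Complex.norm_I, Complex.norm_real, Real.norm_eq_abs, abs_mul, hσ,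
        abs_of_pos Real.pi_pos]
      ring
    have h4 := norm_sub_le (((σ n * Real.pi : ℝ) : ℂ) * Complex.I)
      (Complex.log (1 + ((u n : ℂ) - u (n + 1)) / (Real.exp (-refOrbit n) : ℝ)))
    have h5 := Real.pi_lt_d2
    refine mem_closedBall_zero_iff.2 ?_
    linarith
  -- Bounded functions `ℕ → B` carry the complete sup metric, and boundedness is automatic.
  let T : BoundedContinuousFunction ℕ B → BoundedContinuousFunction ℕ B := fun u =>
    BoundedContinuousFunction.mkOfDiscrete (fun n => ⟨_, hmem u n⟩) 8 (by
      intro m n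
      have h1 := Metric.mem_closedBall.1 (hmem u m)
      have h2 := Metric.mem_closedBall.1 (hmem u n)
      rw [Subtype.dist_eq]
      refine (dist_triangle_right _ _ (0 : ℂ)).trans ?_
      linarith)
  have hT : ContractingWith (1 / 2) T := by
    refine ⟨by rw [← NNReal.coe_lt_coe]; norm_num, LipschitzWith.of_dist_le_mul fun u w => ?_⟩
    rw [BoundedContinuousFunction.dist_le (by positivity)]
    intro n
    have h0 := norm_log_one_add_sub_le (hsmall w n) (hsmall u n)
    have h1 := BoundedContinuousFunction.dist_coe_le_dist (f := u) (g := w) n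
    have h2 := BoundedContinuousFunction.dist_coe_le_dist (f := u) (g := w) (n + 1)
    rw [Subtype.dist_eq, dist_eq_norm] at h1 h2
    have h3 : ‖((w n : ℂ) - w (n + 1)) / (Real.exp (-refOrbit n) : ℝ) -
        ((u n : ℂ) - u (n + 1)) / (Real.exp (-refOrbit n) : ℝ)‖ ≤ 1 / 4 * dist u w := by
      rw [← sub_div, norm_div, Complex.norm_real, Real.norm_eq_abs, abs_of_pos (Real.exp_pos _),
        div_le_iff₀ (Real.exp_pos _)]
      have h4 := norm_sub_le ((u (n + 1) : ℂ) - w (n + 1)) ((u n : ℂ) - w n)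
      have h5 : ((w n : ℂ) - w (n + 1)) - (u n - u (n + 1)) =
        (u (n + 1) - w (n + 1)) - (u n - w n) := by ring
      rw [h5]
      nlinarith [exp_refOrbit_ge n, dist_nonneg (x := u) (y := w)]
    rw [Subtype.dist_eq, dist_eq_norm]
    change ‖(_ - _) - (_ - _)‖ ≤ _
    rw [sub_sub_sub_cancel_left]
    have h6 : ((1 / 2 : NNReal) : ℝ) = 1 / 2 := by norm_num
    rw [h6]
    linarith
  have : Nonempty (BoundedContinuousFunction ℕ B) :=
    ⟨BoundedContinuousFunction.const ℕ ⟨0, by simp [hB]⟩⟩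
  have : CompleteSpace B := Metric.isClosed_closedBall.completeSpace_coe
  refine ⟨fun n => (hT.fixedPoint T n : ℂ), fun n => ?_, fun n => ?_⟩
  · exact mem_closedBall_zero_iff.1 (hT.fixedPoint T n).2
  · have h := hT.fixedPoint_isFixedPt
    have hfix : ((T (hT.fixedPoint T)) n : ℂ) = hT.fixedPoint T n := by rw [h]
    exact hfix.symm

/-! ### Staying in the strip -/

lemma excess_doubles {z : ℂ} (hre : z.re ≤ -6) (h1 : Real.pi < |z.im|) (h2 : |z.im| ≤ 4) :
    2 * (|z.im| - Real.pi) ≤ |(f z).im| - Real.pi := by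
  have him : (f z).im = z.im - Real.exp (-z.re) * Real.sin z.im := by
    simp [f, Complex.exp_im]
    ring
  have hE : 2 ≤ Real.exp (-z.re) := by
    have := Real.add_one_le_exp (-z.re)
    linarith
  have hpi := Real.pi_gt_three
  set d := |z.im| - Real.pi with hd
  have hd0 : 0 < d := by linarith
  have hd1 : d ≤ 1 := by linarith
  have hsin : d / 2 ≤ Real.sin d := by
    have h3 := Real.sin_gt_sub_cube hd0
    nlinarith [h3, mul_nonneg hd0.le (sub_nonneg.2 hd1), pow_pos hd0 3, sq_nonneg d]
  have hprod : d ≤ Real.exp (-z.re) * Real.sin d := by nlinarith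
  rcases le_total 0 z.im with h | h
  · have hz : z.im = d + Real.pi := by rw [hd, abs_of_nonneg h]; ring
    have h4 := le_abs_self (f z).im
    rw [him, hz, Real.sin_add_pi] at h4
    rw [him, hz, Real.sin_add_pi]
    linarith
  · have hz : z.im = -(d + Real.pi) := by rw [hd, abs_of_nonpos h]; ring
    have h4 := neg_le_abs (f z).im
    rw [him, hz, Real.sin_neg, Real.sin_add_pi] at h4
    rw [him, hz, Real.sin_neg, Real.sin_add_pi]
    linarith

lemma mem_Shat_of_orbit {z : ℂ} (hre : ∀ n, (f^[n] z).re ≤ -6) (him : ∀ n, |(f^[n] z).im| ≤ 4) :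
    z ∈ Shat := by
  intro n
  by_contra! hn
  have key : ∀ k : ℕ, 2 ^ k * (|(f^[n] z).im| - Real.pi) ≤ |(f^[n + k] z).im| - Real.pi := by
    intro k
    induction k with
    | zero => simp
    | succ k ih =>
      have hpos : 0 < 2 ^ k * (|(f^[n] z).im| - Real.pi) :=
        mul_pos (by positivity) (by linarith)
      have h := excess_doubles (hre (n + k)) (by linarith) (him (n + k))
      rw [← add_assoc, Function.iterate_succ_apply', pow_succ]
      linarith
  have hlim : Tendsto (fun k : ℕ => 2 ^ k * (|(f^[n] z).im| - Real.pi)) atTop atTop :=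
    (tendsto_pow_atTop_atTop_of_one_lt (by norm_num)).atTop_mul_const (by linarith)
  obtain ⟨k, hk⟩ := (hlim.eventually_ge_atTop 2).exists
  linarith [key k, him (n + k), Real.pi_gt_three]

/-! ### Leaving the interior -/

lemma hasDerivAt_f (z : ℂ) : HasDerivAt f (1 - Complex.exp (-z)) z := by
  have h : HasDerivAt f (1 + Complex.exp (-z) * -1) z :=
    (hasDerivAt_id z).add (hasDerivAt_id z).neg.cexp
  exact h.congr_deriv (by ring)

lemma differentiable_iterate_f (n : ℕ) : Differentiable ℂ f^[n] :=
  Differentiable.iterate (fun z => (hasDerivAt_f z).differentiableAt) n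

lemma two_pow_le_norm_deriv {z : ℂ} (hre : ∀ n, (f^[n] z).re ≤ -6) (n : ℕ) :
    2 ^ n ≤ ‖deriv f^[n] z‖ := by
  induction n with
  | zero => simp
  | succ n ih =>
    have h := (hasDerivAt_f (f^[n] z)).comp z (differentiable_iterate_f n z).hasDerivAt
    rw [Function.iterate_succ', h.deriv, norm_mul, pow_succ, mul_comm]
    have h1 : ‖Complex.exp (-(f^[n] z))‖ - 1 ≤ ‖1 - Complex.exp (-(f^[n] z))‖ := by
      have := norm_sub_norm_le (Complex.exp (-(f^[n] z))) 1
      rwa [norm_one, norm_sub_rev] at this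
    rw [Complex.norm_exp, Complex.neg_re] at h1
    have h2 := Real.add_one_le_exp (-(f^[n] z).re)
    have h3 := hre n
    gcongr
    linarith

lemma not_mem_interior {z : ℂ} (hre : ∀ n, (f^[n] z).re ≤ -6) : z ∉ interior Shat := by
  intro hz
  have hzS : z ∈ Shat := interior_subset hz
  obtain ⟨r, hr, hball⟩ := Metric.nhds_basis_closedBall.mem_iff.1 (mem_interior_iff_mem_nhds.1 hz)
  -- `exp (I * w)` turns the bounded imaginary part into a bounded modulus.
  have hbound : ∀ n : ℕ, Real.exp (-Real.pi) * ‖deriv f^[n] z‖ ≤ Real.exp Real.pi / r := by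
    intro n
    have hd : Differentiable ℂ (fun w => Complex.exp (Complex.I * f^[n] w)) :=
      ((differentiable_iterate_f n).const_mul _).cexp
    have hnorm : ∀ w, ‖Complex.exp (Complex.I * f^[n] w)‖ = Real.exp (-(f^[n] w).im) := by
      intro w
      simp [Complex.norm_exp]
    have hC := Complex.norm_deriv_le_of_forall_mem_sphere_norm_le (c := z) hr hd.diffContOnCl
      (C := Real.exp Real.pi) (fun w hw => by
        rw [hnorm]
        have := (abs_le.1 (hball (Metric.sphere_subset_closedBall hw) n)).1
        exact Real.exp_le_exp.2 (by linarith))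
    have hderiv := ((differentiable_iterate_f n z).hasDerivAt.const_mul Complex.I).cexp
    rw [hderiv.deriv, norm_mul, norm_mul, Complex.norm_I, one_mul, hnorm] at hC
    refine le_trans ?_ hC
    gcongr
    exact (abs_le.1 (hzS n)).2
  have hlim : Tendsto (fun n : ℕ => Real.exp (-Real.pi) * (2 : ℝ) ^ n) atTop atTop :=
    (tendsto_pow_atTop_atTop_of_one_lt (by norm_num)).const_mul_atTop (Real.exp_pos _)
  obtain ⟨n, hn⟩ := (hlim.eventually_gt_atTop (Real.exp Real.pi / r)).exists
  have h1 := mul_le_mul_of_nonneg_left (two_pow_le_norm_deriv hre n) (Real.exp_pos (-Real.pi)).le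
  linarith [hbound n]

/-! ### Conclusion -/

/-- for every itinerary there is a left-escaping point of the frontier of Ŝ
realizing it. -/
theorem exists_escaping_point_with_itinerary (s : ℕ → Fin 2) :
    ∃ z : ℂ, z ∈ frontier Shat ∧
      Tendsto (fun n : ℕ => ((f^[n]) z).re) atTop atBot ∧
      HasItinerary z s := by
  obtain ⟨σ, hσ⟩ : ∃ σ : ℕ → ℝ, σ = fun n => if s n = 0 then 1 else -1 := ⟨_, rfl⟩
  have hσ1 : ∀ n, σ n = 1 ∨ σ n = -1 := by
    intro n
    rw [hσ]
    by_cases h : s n = 0 <;> simp [h]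
  obtain ⟨u, hu4, hu⟩ := exists_fixed_seq σ (fun n => by
    rcases hσ1 n with h | h <;> simp [h])
  have hv : ∀ n, ‖(u n - u (n + 1)) / (Real.exp (-refOrbit n) : ℝ)‖ ≤ 1 / 4 := by
    intro n
    rw [norm_div, Complex.norm_real, Real.norm_eq_abs, abs_of_pos (Real.exp_pos _),
      div_le_iff₀ (Real.exp_pos _)]
    linarith [norm_sub_le (u n) (u (n + 1)), hu4 n, hu4 (n + 1), exp_refOrbit_ge n]
  have hstep : ∀ n, f (refOrbit n + u n) = refOrbit (n + 1) + u (n + 1) := by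
    intro n
    have hne : 1 + (u n - u (n + 1)) / (Real.exp (-refOrbit n) : ℝ) ≠ 0 := by
      intro h
      have h1 := hv n
      rw [eq_neg_of_add_eq_zero_right h, norm_neg, norm_one] at h1
      norm_num at h1
    have hE : ((Real.exp (-refOrbit n) : ℝ) : ℂ) ≠ 0 :=
      Complex.ofReal_ne_zero.2 (Real.exp_pos _).ne'
    have hπ : Complex.exp (-((σ n * Real.pi : ℝ) * Complex.I)) = -1 := by
      rcases hσ1 n with h | h <;> simp [h, Complex.exp_neg, Complex.exp_pi_mul_I]
    have hexp : Complex.exp (-u n) =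
        -(1 + (u n - u (n + 1)) / (Real.exp (-refOrbit n) : ℝ)) := by
      conv_lhs => rw [hu n]
      rw [neg_sub, sub_eq_add_neg, Complex.exp_add, Complex.exp_log hne, hπ]
      ring
    have h2 : Complex.exp (-(refOrbit n + u n)) =
        -((Real.exp (-refOrbit n) : ℝ) + (u n - u (n + 1))) := by
      rw [neg_add, Complex.exp_add, hexp, ← Complex.ofReal_neg, ← Complex.ofReal_exp]
      field_simp
    simp only [f, h2, refOrbit]
    push_cast
    ring
  have horbit : ∀ n, f^[n] (refOrbit 0 + u 0) = refOrbit n + u n := by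
    intro n
    induction n with
    | zero => rfl
    | succ n ih => rw [Function.iterate_succ_apply', ih, hstep]
  have hre : ∀ n : ℕ, (f^[n] (refOrbit 0 + u 0)).re ≤ -6 - n := by
    intro n
    rw [horbit, Complex.add_re, Complex.ofReal_re]
    linarith [refOrbit_le n, hu4 n, Complex.re_le_norm (u n)]
  have hre6 : ∀ n : ℕ, (f^[n] (refOrbit 0 + u 0)).re ≤ -6 := fun n => by
    linarith [hre n, (n.cast_nonneg : (0 : ℝ) ≤ n)]
  have him : ∀ n : ℕ, (f^[n] (refOrbit 0 + u 0)).im = (u n).im := by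
    intro n
    rw [horbit, Complex.add_im, Complex.ofReal_im, zero_add]
  have hclose : ∀ n, |(u n).im - σ n * Real.pi| ≤ 1 := by
    intro n
    have h1 := Complex.norm_log_one_add_half_le_self ((hv n).trans (by norm_num))
    have h2 := Complex.abs_im_le_norm (u n - (σ n * Real.pi : ℝ) * Complex.I)
    have h3 : u n - (σ n * Real.pi : ℝ) * Complex.I =
        -Complex.log (1 + (u n - u (n + 1)) / (Real.exp (-refOrbit n) : ℝ)) := by
      conv_lhs => rw [hu n]
      ring
    rw [Complex.sub_im, Complex.im_ofReal_mul, Complex.I_im, mul_one, h3, norm_neg] at h2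
    linarith [hv n]
  have hmem : (refOrbit 0 + u 0 : ℂ) ∈ Shat := mem_Shat_of_orbit hre6 fun n => by
    rw [him]
    exact (Complex.abs_im_le_norm _).trans (hu4 n)
  refine ⟨refOrbit 0 + u 0, ⟨subset_closure hmem, not_mem_interior hre6⟩, ?_, fun n => ⟨?_, ?_⟩⟩
  · refine tendsto_atBot_mono hre ?_
    exact tendsto_atBot_add_const_left _ (-6)
      (tendsto_neg_atTop_atBot.comp tendsto_natCast_atTop_atTop)
  · intro h
    have h1 : σ n = 1 := by simp [hσ, h]
    have h2 := abs_le.1 (hclose n)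
    rw [h1] at h2
    rw [him]
    linarith [Real.pi_gt_three]
  · intro h
    have h1 : σ n = -1 := by simp [hσ, h]
    have h2 := abs_le.1 (hclose n)
    rw [h1] at h2
    rw [him]
    linarith [Real.pi_gt_three]
end

section
/- Let f(z) = z + exp(−z). Let z be a point of the topological frontier of Ŝ such that f^n(z) ∉ ℝ for all n ≥ 0, and let s : ℕ → {0,1} be its itinerary. Then z belongs to the closure in ℂ of the set E_s = {w ∈ Ŝ : w has itinerary s and Re f^m(w) → −∞ as m → ∞}; that is, every frontier point is in the closure of the left-escaping points sharing its itinerary. -/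
/-!
Why a frontier point `z` with itinerary `s` is a limit of left-escaping points with itinerary `s`.

If `Re f^n z → -∞` then `z` itself is such a point; this covers orbits that meet the lines
`Im = ±π`, which are invariant and escape to the left (`tendsto_of_line`). Otherwise the orbit of
`z` returns infinitely often to a fixed compact part of `{0 < |Im| ≤ π}` (`recurrence`): the right
half-strip `Re > 0, |Im| < π/2` is forward invariant, hence interior to `Shat`, so the orbit never
enters it, and it also stays away from the real axis; outside of these, an orbit to the right of
the imaginary axis drifts back to the left in steps of length less than `1`.

The map `f` sends each strip `Q i` (`0 < ±Im < 2π`) injectively onto a set containing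
`Q 0 ∪ Q 1`, so there are holomorphic inverse branches (`exists_branch`), and composing them along
the itinerary gives a branch `Φ` of `f^(-n)` on `Q (s n)` with `Φ (f^n z) = z`
(`exists_pullback`). It takes values in a horizontal strip, so a normal-families argument
(`strip_alternative`) yields an alternative on a fixed compact set: either `Φ` is `ε`-close to `z`
there, or the image of `Φ` contains a disc about `z` of radius independent of `n`. The second case
is impossible for large `n` (`exists_escape`): a disc about `z` following the strips `Q (s k)`
forever would contain a point mapped to `Im = ±π`, where the derivatives of the iterates blow up,
against the Cauchy estimate for strip-valued functions.

Finally, every itinerary is realised by a left-escaping point in a fixed box near `-5 ± iπ`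
(`exists_ray_point`), obtained by a nested intersection using the strong expansion of `f` far to
the left. Applied to the shifted itinerary and pulled back by `Φ`, this gives left-escaping points
with itinerary `s` within `ε` of `z`.
-/

open Complex Filter Topology Set

/-- The set of left-escaping points of Ŝ with itinerary `s` (the dynamic ray of sequence `s`). -/
def raySet (s : ℕ → Fin 2) : Set ℂ :=
  {z : ℂ | z ∈ Shat ∧ HasItinerary z s ∧
    Tendsto (fun n : ℕ => ((f^[n]) z).re) atTop atBot}

/-! ### The map and its real coordinates -/

lemma f_re (w : ℂ) : (f w).re = w.re + Real.exp (-w.re) * Real.cos w.im := by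
  simp [f, Complex.exp_re]

lemma f_im (w : ℂ) : (f w).im = w.im - Real.exp (-w.re) * Real.sin w.im := by
  simp [f, Complex.exp_im]; ring

lemma f_conj (w : ℂ) : f (starRingEnd ℂ w) = starRingEnd ℂ (f w) := by
  simp [f, ← Complex.exp_conj]

lemma f_hasStrictDerivAt (w : ℂ) : HasStrictDerivAt f (1 - Complex.exp (-w)) w := by
  have h := (hasStrictDerivAt_id w).add ((hasStrictDerivAt_id w).neg.cexp)
  have e : (1 : ℂ) - Complex.exp (-w) = 1 + Complex.exp (-id w) * -1 := by simp; ring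
  rw [e]
  exact h

lemma f_differentiable : Differentiable ℂ f := fun w =>
  (f_hasStrictDerivAt w).hasDerivAt.differentiableAt

lemma f_iter_differentiable (n : ℕ) : Differentiable ℂ (f^[n]) :=
  f_differentiable.iterate n

lemma one_sub_exp_ne_zero {w : ℂ} (h0 : w.im ≠ 0) (h1 : |w.im| < 2 * Real.pi) :
    1 - Complex.exp (-w) ≠ 0 := by
  intro h
  obtain ⟨n, hn⟩ := Complex.exp_eq_one_iff.1 (sub_eq_zero.1 h).symm
  have him : -w.im = n * (2 * Real.pi) := by simpa using congrArg Complex.im hn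
  have hpi := Real.pi_pos
  have hn0 : n ≠ 0 := by rintro rfl; apply h0; simpa using him
  have h3 : (1 : ℝ) ≤ |(n : ℝ)| := by exact_mod_cast Int.one_le_abs hn0
  have h4 : |w.im| = |(n : ℝ)| * (2 * Real.pi) := by
    rw [← abs_neg, him, abs_mul, abs_of_pos (by positivity : 0 < 2 * Real.pi)]
  nlinarith

/-! ### Inverse branches -/

/-- Sign of the half-plane coded by a symbol: `+1` (upper) for `0`, `-1` (lower) for `1`. -/
noncomputable def sg (i : Fin 2) : ℝ := if i = 0 then 1 else -1

/-- The open strip of height `2π` adjacent to the real axis, on the side coded by `i`.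
It contains the corresponding half of the strip `S` together with the line `Im = ±π`. -/
def Q (i : Fin 2) : Set ℂ := {w | 0 < sg i * w.im ∧ sg i * w.im < 2 * Real.pi}

lemma mem_Q_zero {w : ℂ} : w ∈ Q 0 ↔ 0 < w.im ∧ w.im < 2 * Real.pi := by simp [Q, sg]

lemma mem_Q_one {w : ℂ} : w ∈ Q 1 ↔ w.im < 0 ∧ -w.im < 2 * Real.pi := by simp [Q, sg]

lemma conj_mem_Q_one {w : ℂ} : starRingEnd ℂ w ∈ Q 1 ↔ w ∈ Q 0 := by
  simp [mem_Q_one, mem_Q_zero]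

lemma conj_mem_Q_zero {w : ℂ} : starRingEnd ℂ w ∈ Q 0 ↔ w ∈ Q 1 := by
  simp [mem_Q_one, mem_Q_zero]

lemma sg_cases (i : Fin 2) : sg i = 1 ∨ sg i = -1 := by
  unfold sg; split_ifs <;> simp

lemma Q_im {i : Fin 2} {w : ℂ} (h : w ∈ Q i) : w.im ≠ 0 ∧ |w.im| < 2 * Real.pi := by
  obtain ⟨h1, h2⟩ := h
  constructor
  · rintro h; simp [h] at h1
  · rcases sg_cases i with h | h <;> rw [h] at h1 h2 <;> rw [abs_lt] <;> constructor <;> linarith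

lemma Q_isOpen (i : Fin 2) : IsOpen (Q i) := by
  have : Continuous fun w : ℂ => sg i * w.im := by fun_prop
  exact (isOpen_lt continuous_const this).inter (isOpen_lt this continuous_const)

lemma Q_convex (i : Fin 2) : Convex ℝ (Q i) := by
  intro a ha b hb s t hs ht hst
  obtain ⟨h1, h2⟩ := ha
  obtain ⟨h3, h4⟩ := hb
  have h : sg i * (s • a + t • b).im = s * (sg i * a.im) + t * (sg i * b.im) := by
    simp; ring
  constructor <;> rw [h]
  · exact (convex_Ioi (0 : ℝ)) h1 h3 hs ht hst
  · exact (convex_Iio (2 * Real.pi)) h2 h4 hs ht hst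

/-- On the upper half-strip `Im f' > 0`, so `f` is injective there (Noshiro–Warschawski). -/
lemma f_inj_half_strip {a b : ℂ} (ha : 0 < a.im) (ha' : a.im < Real.pi) (hb : 0 < b.im)
    (hb' : b.im < Real.pi) (h : f a = f b) : a = b := by
  by_contra hab
  have hd : b - a ≠ 0 := sub_ne_zero.2 (Ne.symm hab)
  let γ : ℝ → ℂ := fun t => a + t * (b - a)
  have hγ : ∀ t : ℝ, HasDerivAt γ (b - a) t := by
    intro t
    have := ((Complex.ofRealCLM.hasDerivAt (x := t)).mul_const (b - a)).const_add a
    simpa [γ] using this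
  let g : ℝ → ℝ := fun t => (f (γ t) / (b - a)).im
  have hg : ∀ t : ℝ, HasDerivAt g (1 - Complex.exp (-γ t)).im t := by
    intro t
    have h1 := ((f_hasStrictDerivAt (γ t)).hasDerivAt.comp_of_eq t (hγ t) rfl).div_const (b - a)
    rw [mul_div_cancel_right₀ _ hd] at h1
    exact (Complex.imCLM.hasFDerivAt.comp_hasDerivAt t h1)
  obtain ⟨c, hc, hc'⟩ := exists_hasDerivAt_eq_slope g (fun t => (1 - Complex.exp (-γ t)).im)
    zero_lt_one (fun t _ => (hg t).continuousAt.continuousWithinAt) (fun t _ => hg t)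
  have h01 : g 1 - g 0 = 0 := by simp [g, γ, h]
  rw [h01] at hc'
  have him : (γ c).im = (1 - c) * a.im + c * b.im := by simp [γ]; ring
  obtain ⟨hc0, hc1⟩ := hc
  have hs : 0 < Real.sin (γ c).im := by
    apply Real.sin_pos_of_pos_of_lt_pi
    · rw [him]; have := mul_pos hc0 hb; nlinarith
    · rw [him]; nlinarith
  have : (1 - Complex.exp (-γ c)).im = Real.exp (-(γ c).re) * Real.sin (γ c).im := by
    simp [Complex.exp_im]
  have hp : 0 < Real.exp (-(γ c).re) * Real.sin (γ c).im := by positivity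
  simp only [zero_div] at hc'
  linarith [this ▸ hc']

lemma f_add_two_pi (w : ℂ) : f (w + 2 * Real.pi * I) = f w + 2 * Real.pi * I := by
  have : Complex.exp (-(w + 2 * Real.pi * I)) = Complex.exp (-w) := by
    rw [neg_add, Complex.exp_add, Complex.exp_neg (2 * Real.pi * I), Complex.exp_two_pi_mul_I]
    simp
  simp only [f, this]; ring

lemma f_im_trichotomy {w : ℂ} (h0 : 0 < w.im) (h1 : w.im < 2 * Real.pi) :
    (w.im < Real.pi ∧ (f w).im < Real.pi) ∨ (w.im = Real.pi ∧ (f w).im = Real.pi) ∨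
      (Real.pi < w.im ∧ Real.pi < (f w).im) := by
  rcases lt_trichotomy w.im Real.pi with h | h | h
  · left
    refine ⟨h, ?_⟩
    have := mul_pos (Real.exp_pos (-w.re)) (Real.sin_pos_of_pos_of_lt_pi h0 h)
    rw [f_im]; linarith
  · right; left
    refine ⟨h, ?_⟩
    rw [f_im, h]; simp
  · right; right
    refine ⟨h, ?_⟩
    have hs : 0 < Real.sin (w.im - Real.pi) :=
      Real.sin_pos_of_pos_of_lt_pi (by linarith) (by linarith)
    rw [Real.sin_sub_pi] at hs
    have := mul_pos (Real.exp_pos (-w.re)) hs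
    rw [f_im]; linarith

lemma line_re_strictMono : StrictMono fun x : ℝ => x - Real.exp (-x) := by
  intro x y hxy
  have : Real.exp (-y) < Real.exp (-x) := Real.exp_lt_exp.2 (by linarith)
  simp only; linarith

lemma f_injOn_Q_zero : InjOn f (Q 0) := by
  intro a ha b hb h
  rw [mem_Q_zero] at ha hb
  rcases f_im_trichotomy ha.1 ha.2 with ⟨h1, h2⟩ | ⟨h1, h2⟩ | ⟨h1, h2⟩ <;>
  rcases f_im_trichotomy hb.1 hb.2 with ⟨h3, h4⟩ | ⟨h3, h4⟩ | ⟨h3, h4⟩ <;>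
  try (rw [h] at h2; linarith)
  · exact f_inj_half_strip ha.1 h1 hb.1 h3 h
  · have hr := congrArg Complex.re h
    rw [f_re, f_re, h1, h3] at hr
    apply Complex.ext _ (h1.trans h3.symm)
    apply line_re_strictMono.injective
    simp at hr ⊢
    linarith
  · -- reflection in the line `Im = π` exchanges the two halves of the strip
    have key : starRingEnd ℂ a + 2 * Real.pi * I = starRingEnd ℂ b + 2 * Real.pi * I := by
      apply f_inj_half_strip <;> try (simp; linarith)
      rw [f_add_two_pi, f_add_two_pi, f_conj, f_conj, h]
    exact (starRingEnd ℂ).injective (add_right_cancel key)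

/-- `f` is proper on the closed strip `0 ≤ Im ≤ 2π`. -/
lemma norm_le_of_f_bounded {w : ℂ} {R : ℝ} (h0 : 0 ≤ w.im) (h1 : w.im ≤ 2 * Real.pi)
    (h : ‖f w‖ ≤ R) : ‖w‖ ≤ 2 * R + 30 := by
  have hn : ‖Complex.exp (-w)‖ = Real.exp (-w.re) := by simp [Complex.norm_exp]
  have hR : 0 ≤ R := (norm_nonneg _).trans h
  have hpi := Real.pi_lt_four
  rcases le_or_gt 0 w.re with hx | hx
  · have h2 : ‖w‖ ≤ ‖f w‖ + ‖Complex.exp (-w)‖ := by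
      have : w = f w - Complex.exp (-w) := by simp [f]
      nth_rw 1 [this]; exact norm_sub_le _ _
    have h3 : Real.exp (-w.re) ≤ 1 := Real.exp_le_one_iff.2 (by linarith)
    rw [hn] at h2
    linarith
  · have h2 : ‖w‖ ≤ |w.re| + |w.im| := Complex.norm_le_abs_re_add_abs_im w
    rw [abs_of_neg hx, abs_of_nonneg h0] at h2
    have h3 : ‖Complex.exp (-w)‖ ≤ ‖f w‖ + ‖w‖ := by
      have : Complex.exp (-w) = f w - w := by simp [f]
      rw [this]; exact norm_sub_le _ _
    rw [hn] at h3
    have h4 := Real.quadratic_le_exp_of_nonneg (x := -w.re) (by linarith)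
    nlinarith [sq_nonneg (w.re + 4)]

lemma f_surj_aux (V : Set ℂ) (hV : IsPreconnected V)
    (hVs : ∀ u ∈ V, u.im ≠ 0 ∧ |u.im| < 2 * Real.pi) (hne : (V ∩ f '' Q 0).Nonempty) :
    V ⊆ f '' Q 0 := by
  apply hV.subset_of_closure_inter_subset (u := f '' Q 0) _ hne
  · -- the image is relatively closed, by properness
    rintro u ⟨hu, huV⟩
    have hC : IsClosed {w : ℂ | 0 ≤ w.im ∧ w.im ≤ 2 * Real.pi} :=
      (isClosed_le continuous_const Complex.continuous_im).inter
        (isClosed_le Complex.continuous_im continuous_const)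
    let K : Set ℂ := Metric.closedBall 0 (2 * (‖u‖ + 1) + 30) ∩
      {w : ℂ | 0 ≤ w.im ∧ w.im ≤ 2 * Real.pi}
    have hK : IsCompact K := (isCompact_closedBall _ _).inter_right hC
    have hfK : IsClosed (f '' K) := (hK.image f_differentiable.continuous).isClosed
    have hmem : u ∈ closure (f '' K) := by
      rw [Metric.mem_closure_iff] at hu ⊢
      intro ε hε
      obtain ⟨v, ⟨w, hw, rfl⟩, hv⟩ := hu (min ε 1) (by positivity)
      refine ⟨f w, ⟨w, ⟨?_, ?_⟩, rfl⟩, hv.trans_le (min_le_left _ _)⟩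
      · rw [mem_Q_zero] at hw
        have : ‖f w‖ ≤ ‖u‖ + 1 := by
          have h1 := hv.trans_le (min_le_right _ _)
          rw [dist_comm, dist_eq_norm] at h1
          have := norm_le_norm_add_norm_sub u (f w)
          rw [norm_sub_rev] at this
          linarith
        simpa using norm_le_of_f_bounded hw.1.le hw.2.le this
      · rw [mem_Q_zero] at hw; exact ⟨hw.1.le, hw.2.le⟩
    rw [hfK.closure_eq] at hmem
    obtain ⟨w, ⟨-, h0, h1⟩, rfl⟩ := hmem
    obtain ⟨h2, h3⟩ := hVs _ huV
    refine ⟨w, mem_Q_zero.2 ⟨lt_of_le_of_ne h0 ?_, lt_of_le_of_ne h1 ?_⟩, rfl⟩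
    · intro h; apply h2; rw [f_im, ← h]; simp
    · intro h
      rw [f_im, h] at h3
      have := Real.pi_pos
      simp [abs_of_pos this] at h3
  · rw [isOpen_iff_mem_nhds]
    rintro _ ⟨w, hw, rfl⟩
    have hQ := Q_im hw
    rw [← (f_hasStrictDerivAt w).map_nhds_eq (one_sub_exp_ne_zero hQ.1 hQ.2)]
    exact image_mem_map ((Q_isOpen 0).mem_nhds hw)

lemma f_surj {u : ℂ} (h0 : u.im ≠ 0) (h1 : |u.im| < 2 * Real.pi) : u ∈ f '' Q 0 := by
  have hpi := Real.pi_pos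
  rw [abs_lt] at h1
  rcases lt_or_gt_of_ne h0 with h | h
  · refine f_surj_aux (Q 1) (Q_convex 1).isPreconnected (fun u hu => Q_im hu) ?_
      (mem_Q_one.2 ⟨h, by linarith⟩)
    -- `-log π + iπ/2` is sent to `-log π - iπ/2`
    refine ⟨f ⟨-Real.log Real.pi, Real.pi / 2⟩, ?_, _, ?_, rfl⟩
    · rw [mem_Q_one, f_im]; simp [Real.exp_log hpi]; constructor <;> linarith
    · rw [mem_Q_zero]; simp only; constructor <;> linarith
  · refine f_surj_aux (Q 0) (Q_convex 0).isPreconnected (fun u hu => Q_im hu) ?_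
      (mem_Q_zero.2 ⟨h, by linarith⟩)
    refine ⟨f ⟨0, Real.pi⟩, ?_, _, ?_, rfl⟩
    · rw [mem_Q_zero, f_im]; simp; constructor <;> linarith
    · rw [mem_Q_zero]; simp only; constructor <;> linarith

/-- The inverse branch of `f` with values in `Q i`: holomorphic on the punctured strip
`0 < |Im u| < 2π`. -/
lemma exists_branch (i : Fin 2) : ∃ φ : ℂ → ℂ,
    (∀ u : ℂ, u.im ≠ 0 → |u.im| < 2 * Real.pi →
      φ u ∈ Q i ∧ f (φ u) = u ∧ DifferentiableAt ℂ φ u) ∧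
    (∀ w ∈ Q i, φ (f w) = w) := by
  have h0 : ∃ φ : ℂ → ℂ,
      (∀ u : ℂ, u.im ≠ 0 → |u.im| < 2 * Real.pi →
        φ u ∈ Q 0 ∧ f (φ u) = u ∧ DifferentiableAt ℂ φ u) ∧
      (∀ w ∈ Q 0, φ (f w) = w) := by
    have hl : ∀ w ∈ Q 0, Function.invFunOn f (Q 0) (f w) = w := fun w hw =>
      f_injOn_Q_zero.leftInvOn_invFunOn hw
    refine ⟨Function.invFunOn f (Q 0), fun u hu hu' => ?_, hl⟩
    obtain ⟨w, hw, rfl⟩ := f_surj hu hu'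
    rw [hl w hw]
    refine ⟨hw, rfl, ?_⟩
    have hQ := Q_im hw
    refine ((f_hasStrictDerivAt w).to_local_left_inverse (one_sub_exp_ne_zero hQ.1 hQ.2)
      ?_).hasDerivAt.differentiableAt
    filter_upwards [(Q_isOpen 0).mem_nhds hw] with x hx using hl x hx
  obtain ⟨φ, h1, h2⟩ := h0
  fin_cases i
  · exact ⟨φ, h1, h2⟩
  · refine ⟨starRingEnd ℂ ∘ φ ∘ starRingEnd ℂ, fun u hu hu' => ?_, fun w hw => ?_⟩
    · obtain ⟨h3, h4, h5⟩ := h1 (starRingEnd ℂ u) (by simpa using hu) (by simpa using hu')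
      refine ⟨conj_mem_Q_one.2 h3, ?_, ?_⟩
      · simp only [Function.comp]; rw [f_conj, h4]; simp
      · simpa using h5.conj_conj
    · simp only [Function.comp]
      rw [← f_conj, h2 _ (conj_mem_Q_zero.2 hw)]; simp

/-- Preimages in `Q i` of points of the closed strip `S` lie in `S`. -/
lemma abs_im_le_of_f {i : Fin 2} {w : ℂ} (hw : w ∈ Q i) (h : |(f w).im| ≤ Real.pi) :
    |w.im| ≤ Real.pi := by
  have key : ∀ w ∈ Q 0, |(f w).im| ≤ Real.pi → |w.im| ≤ Real.pi := by
    intro w hw h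
    rw [mem_Q_zero] at hw
    rw [abs_le] at h
    rw [abs_of_pos hw.1]
    rcases f_im_trichotomy hw.1 hw.2 with ⟨h1, h2⟩ | ⟨h1, h2⟩ | ⟨h1, h2⟩ <;> linarith
  fin_cases i
  · exact key w hw h
  · have := key (starRingEnd ℂ w) (conj_mem_Q_zero.2 hw) (by rw [f_conj]; simpa using h)
    simpa using this

/-! ### Holomorphic functions with values in a horizontal strip -/

/-- Cauchy estimate for a strip-valued function, obtained by applying the usual one to
`exp (i g)`, whose modulus lies between `e^(-2π)` and `e^(2π)`. -/
lemma norm_deriv_le_of_strip {g : ℂ → ℂ} {c : ℂ} {R : ℝ} (hR : 0 < R)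
    (hg : DifferentiableOn ℂ g (Metric.closedBall c R))
    (hs : ∀ w ∈ Metric.closedBall c R, |(g w).im| ≤ 2 * Real.pi) :
    ‖deriv g c‖ ≤ Real.exp (4 * Real.pi) / R := by
  have hG : DifferentiableOn ℂ (fun w => Complex.exp (I * g w)) (Metric.closedBall c R) :=
    (hg.const_mul I).cexp
  have hnorm : ∀ w, ‖Complex.exp (I * g w)‖ = Real.exp (-(g w).im) := by
    intro w; simp [Complex.norm_exp]
  have h1 : ‖deriv (fun w => Complex.exp (I * g w)) c‖ ≤ Real.exp (2 * Real.pi) / R := by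
    refine Complex.norm_deriv_le_of_forall_mem_sphere_norm_le hR
      (hG.diffContOnCl_ball (subset_refl _)) (fun w hw => ?_)
    rw [hnorm]
    have := abs_le.1 (hs w (Metric.sphere_subset_closedBall hw))
    exact Real.exp_le_exp.2 (by linarith)
  have hgc : HasDerivAt g (deriv g c) c :=
    (hg.differentiableAt (Metric.closedBall_mem_nhds c hR)).hasDerivAt
  rw [((hgc.const_mul I).cexp).deriv, norm_mul, hnorm, norm_mul, Complex.norm_I, one_mul] at h1
  have h2 : Real.exp (-(2 * Real.pi)) ≤ Real.exp (-(g c).im) := by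
    have := abs_le.1 (hs c (Metric.mem_closedBall_self hR.le))
    exact Real.exp_le_exp.2 (by linarith)
  have h3 : Real.exp (-(2 * Real.pi)) * ‖deriv g c‖ ≤ Real.exp (2 * Real.pi) / R :=
    (mul_le_mul_of_nonneg_right h2 (norm_nonneg _)).trans h1
  calc ‖deriv g c‖ = Real.exp (2 * Real.pi) * (Real.exp (-(2 * Real.pi)) * ‖deriv g c‖) := by
        rw [← mul_assoc, ← Real.exp_add]; simp
    _ ≤ Real.exp (2 * Real.pi) * (Real.exp (2 * Real.pi) / R) :=
        mul_le_mul_of_nonneg_left h3 (Real.exp_pos _).le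
    _ = Real.exp (4 * Real.pi) / R := by
        rw [← mul_div_assoc, ← Real.exp_add]; ring_nf

/-- Holomorphic functions on `U` with values in the closed strip `|Im| ≤ 2π`. -/
def StripFun (U : Set ℂ) (g : ℂ → ℂ) : Prop :=
  DifferentiableOn ℂ g U ∧ ∀ w ∈ U, |(g w).im| ≤ 2 * Real.pi

/-- Strip-valued functions are uniformly Lipschitz along segments contained in a compact set. -/
lemma StripFun.lipschitz {U K : Set ℂ} (hU : IsOpen U) (hK : IsCompact K)
    (hKU : K ⊆ U) : ∃ C : ℝ, 0 < C ∧ ∀ g, StripFun U g → ∀ a b, segment ℝ a b ⊆ K →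
      ‖g b - g a‖ ≤ C * ‖b - a‖ := by
  obtain ⟨ρ, hρ, hsub⟩ := hK.exists_cthickening_subset_open hU hKU
  refine ⟨Real.exp (4 * Real.pi) / ρ, by positivity, fun g hg a b hab => ?_⟩
  have hball : ∀ x ∈ K, Metric.closedBall x ρ ⊆ U := fun x hx =>
    (Metric.closedBall_subset_cthickening hx ρ).trans hsub
  exact (convex_segment a b).norm_image_sub_le_of_norm_deriv_le
    (fun x hx => hg.1.differentiableAt (hU.mem_nhds (hKU (hab hx))))
    (fun x hx => norm_deriv_le_of_strip hρ (hg.1.mono (hball x (hab hx)))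
      (fun w hw => hg.2 w (hball x (hab hx) hw)))
    (left_mem_segment ℝ a b) (right_mem_segment ℝ a b)

/-- Normal-families alternative: a strip-valued function taking the value `z` on the compact set
`K` either is uniformly `ε`-close to `z` on `K`, or covers a disc about `z` of radius depending
only on `K`, `z` and `ε`. -/
lemma strip_alternative {U K : Set ℂ} (hU : IsOpen U) (hUc : Convex ℝ U) (hK : IsCompact K)
    (hKU : K ⊆ U) (z : ℂ) {ε : ℝ} (hε : 0 < ε) :
    ∃ r : ℝ, 0 < r ∧ ∀ g, StripFun U g → ∀ a ∈ K, g a = z → ∀ p ∈ K,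
      ‖g p - z‖ < ε ∨ Metric.ball z r ⊆ g '' U := by
  by_contra hcon
  push Not at hcon
  choose! g hg a ha hga p hp hgp hball using
    fun n : ℕ => hcon (1 / ((n : ℝ) + 1)) (by positivity)
  -- Limits along a fixed nonprincipal ultrafilter take the place of subsequences.
  let 𝒰 : Ultrafilter ℕ := hyperfilter ℕ
  obtain ⟨a₀, ha₀, hlima⟩ : ∃ a₀ ∈ K, Tendsto a 𝒰 (𝓝 a₀) :=
    hK.ultrafilter_le_nhds (𝒰.map a) (by
      rw [le_principal_iff]; exact Filter.mem_map.2 (Filter.univ_mem' ha))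
  obtain ⟨p₀, hp₀, hlimp⟩ : ∃ p₀ ∈ K, Tendsto p 𝒰 (𝓝 p₀) :=
    hK.ultrafilter_le_nhds (𝒰.map p) (by
      rw [le_principal_iff]; exact Filter.mem_map.2 (Filter.univ_mem' hp))
  have hpt : ∀ w ∈ U, ∃ v, Tendsto (fun n => g n w) 𝒰 (𝓝 v) := by
    intro w hw
    -- the union of the segments joining `w` to points of `K`
    let T : Set ℂ := (fun q : ℂ × ℝ => q.1 + q.2 • (w - q.1)) '' (K ×ˢ Icc (0 : ℝ) 1)
    have hT : IsCompact T := (hK.prod isCompact_Icc).image (by fun_prop)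
    have hseg : ∀ x ∈ K, segment ℝ x w ⊆ T := by
      intro x hx
      rw [segment_eq_image']
      rintro _ ⟨t, ht, rfl⟩
      exact ⟨(x, t), ⟨hx, ht⟩, rfl⟩
    have hTU : T ⊆ U := by
      rintro _ ⟨⟨x, t⟩, ⟨hx, ht⟩, rfl⟩
      apply hUc.segment_subset (hKU hx) hw
      rw [segment_eq_image']
      exact ⟨t, ht, rfl⟩
    obtain ⟨C, hC, hlip⟩ := StripFun.lipschitz hU hT hTU
    obtain ⟨D, hD⟩ := hT.isBounded.exists_norm_le
    have hb : ∀ n, g n w ∈ Metric.closedBall z (C * (D + D)) := by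
      intro n
      have h1 := hlip (g n) (hg n) (a n) w (hseg _ (ha n))
      rw [hga n] at h1
      rw [mem_closedBall_iff_norm]
      refine h1.trans (mul_le_mul_of_nonneg_left ?_ hC.le)
      exact (norm_sub_le _ _).trans (add_le_add
        (hD _ (hseg _ (ha n) (right_mem_segment ℝ _ _)))
        (hD _ (hseg _ (ha n) (left_mem_segment ℝ _ _))))
    obtain ⟨v, -, hv⟩ := (isCompact_closedBall z (C * (D + D))).ultrafilter_le_nhds
      (𝒰.map fun n => g n w) (by
        rw [le_principal_iff]; exact Filter.mem_map.2 (Filter.univ_mem' hb))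
    exact ⟨v, hv⟩
  choose! G hG using hpt
  -- On a small disc all `g n` share a Lipschitz constant, which passes to the limit.
  have hloc : ∀ w ∈ U, ∃ ρ > 0, ∃ C > 0, Metric.closedBall w ρ ⊆ U ∧
      (∀ n, ∀ x ∈ Metric.closedBall w ρ, ∀ y ∈ Metric.closedBall w ρ,
        ‖g n y - g n x‖ ≤ C * ‖y - x‖) ∧
      (∀ x ∈ Metric.closedBall w ρ, ∀ y ∈ Metric.closedBall w ρ,
        ‖G y - G x‖ ≤ C * ‖y - x‖) := by
    intro w hw
    obtain ⟨ρ, hρ, hsub⟩ := Metric.nhds_basis_closedBall.mem_iff.1 (hU.mem_nhds hw)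
    obtain ⟨C, hC, hlip⟩ := StripFun.lipschitz hU (isCompact_closedBall w ρ) hsub
    have hseg : ∀ x ∈ Metric.closedBall w ρ, ∀ y ∈ Metric.closedBall w ρ,
        segment ℝ x y ⊆ Metric.closedBall w ρ := fun x hx y hy =>
      (convex_closedBall w ρ).segment_subset hx hy
    refine ⟨ρ, hρ, C, hC, hsub, fun n x hx y hy => hlip _ (hg n) x y (hseg x hx y hy), ?_⟩
    intro x hx y hy
    exact le_of_tendsto ((hG y (hsub hy)).sub (hG x (hsub hx))).norm
      (Eventually.of_forall fun n => hlip _ (hg n) x y (hseg x hx y hy))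
  have hunif : ∀ w ∈ U, ∀ η > 0, ∃ t ∈ 𝓝 w, ∀ᶠ n in (𝒰 : Filter ℕ), ∀ y ∈ t,
      dist (G y) (g n y) < η := by
    intro w hw η hη
    obtain ⟨ρ, hρ, C, hC, hsub, h1, h2⟩ := hloc w hw
    refine ⟨Metric.closedBall w (min ρ (η / (4 * C))),
      Metric.closedBall_mem_nhds _ (by positivity), ?_⟩
    filter_upwards [(Metric.tendsto_nhds.1 (hG w hw)) (η / 4) (by positivity)] with n hn y hy
    have hy1 : y ∈ Metric.closedBall w ρ :=
      Metric.closedBall_subset_closedBall (min_le_left _ _) hy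
    have hy2 : C * ‖y - w‖ ≤ η / 4 := by
      have : ‖y - w‖ ≤ η / (4 * C) := (mem_closedBall_iff_norm.1 hy).trans (min_le_right _ _)
      calc C * ‖y - w‖ ≤ C * (η / (4 * C)) := mul_le_mul_of_nonneg_left this hC.le
        _ = η / 4 := by field_simp
    have hw1 := Metric.mem_closedBall_self (x := w) hρ.le
    have h3 := h1 n w hw1 y hy1
    have h4 := h2 w hw1 y hy1
    rw [← dist_eq_norm] at h3 h4
    have h5 := dist_triangle4 (G y) (G w) (g n w) (g n y)
    rw [dist_comm (G w), dist_comm (g n w) (g n y)] at h5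
    linarith
  have hTLU : TendstoLocallyUniformlyOn g G 𝒰 U := by
    rw [Metric.tendstoLocallyUniformlyOn_iff]
    intro η hη w hw
    obtain ⟨t, ht, h⟩ := hunif w hw η hη
    exact ⟨t, mem_nhdsWithin_of_mem_nhds ht, h⟩
  have hGd : DifferentiableOn ℂ G U :=
    hTLU.differentiableOn (Eventually.of_forall fun n => (hg n).1) hU
  have hGa : ∀ (q : ℕ → ℂ) (q₀ : ℂ), q₀ ∈ U → Tendsto q 𝒰 (𝓝 q₀) →
      Tendsto (fun n => g n (q n)) 𝒰 (𝓝 (G q₀)) := by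
    intro q q₀ hq₀ hq
    exact hTLU.tendsto_comp (hGd.continuousOn.continuousWithinAt hq₀) hq₀
      (tendsto_nhdsWithin_iff.2 ⟨hq, hq.eventually (hU.mem_nhds hq₀)⟩)
  have hGz : G a₀ = z :=
    tendsto_nhds_unique (hGa a a₀ (hKU ha₀) hlima) (by simp [hga])
  have hGp : ε ≤ ‖G p₀ - z‖ :=
    ge_of_tendsto ((hGa p p₀ (hKU hp₀) hlimp).sub_const z).norm (Eventually.of_forall hgp)
  have hGan : AnalyticOnNhd ℂ G U := hGd.analyticOnNhd hU
  have hne : ∀ᶠ w in 𝓝[≠] a₀, G w ≠ z := by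
    rcases (hGan a₀ (hKU ha₀)).eventually_eq_or_eventually_ne analyticAt_const (g := fun _ => z)
      with h | h
    · exfalso
      have := hGan.eqOn_of_preconnected_of_eventuallyEq (fun _ _ => analyticAt_const)
        hUc.isPreconnected (hKU ha₀) h (hKU hp₀)
      rw [this] at hGp
      simp at hGp; linarith
    · exact h
  -- A circle about `a₀` on which `G` stays away from `z`.
  obtain ⟨ρ, hρ, hsub, hcirc⟩ : ∃ ρ > 0, Metric.closedBall a₀ ρ ⊆ U ∧
      ∀ w ∈ Metric.sphere a₀ ρ, G w ≠ z := by
    obtain ⟨ρ₁, hρ₁, h1⟩ := Metric.nhds_basis_closedBall.mem_iff.1 (hU.mem_nhds (hKU ha₀))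
    obtain ⟨ρ₂, hρ₂, h2⟩ := Metric.nhds_basis_closedBall.mem_iff.1
      (eventually_nhdsWithin_iff.1 hne)
    refine ⟨min ρ₁ ρ₂, by positivity,
      (Metric.closedBall_subset_closedBall (min_le_left _ _)).trans h1, fun w hw => ?_⟩
    refine h2 (Metric.closedBall_subset_closedBall (min_le_right _ _)
      (Metric.sphere_subset_closedBall hw)) ?_
    exact Metric.ne_of_mem_sphere hw (by positivity)
  obtain ⟨m, hm, hmin⟩ : ∃ m > 0, ∀ w ∈ Metric.sphere a₀ ρ, m ≤ ‖G w - z‖ := by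
    have hc : ContinuousOn (fun w => ‖G w - z‖) (Metric.sphere a₀ ρ) :=
      ((hGd.continuousOn.mono (Metric.sphere_subset_closedBall.trans hsub)).sub
        continuousOn_const).norm
    obtain ⟨x, hx, hxm⟩ := (isCompact_sphere a₀ ρ).exists_isMinOn
      (NormedSpace.sphere_nonempty.2 hρ.le) hc
    exact ⟨‖G x - z‖, norm_pos_iff.2 (sub_ne_zero.2 (hcirc x hx)), fun w hw => hxm hw⟩
  have hev : ∀ᶠ n in (𝒰 : Filter ℕ), ∀ w ∈ Metric.closedBall a₀ ρ,
      dist (G w) (g n w) < m / 8 := by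
    have := (tendstoLocallyUniformlyOn_iff_forall_isCompact hU).1 hTLU _ hsub
      (isCompact_closedBall a₀ ρ)
    exact Metric.tendstoUniformlyOn_iff.1 this (m / 8) (by positivity)
  have hsmall : ∀ᶠ n : ℕ in (𝒰 : Filter ℕ), 1 / ((n : ℝ) + 1) < m / 8 := by
    have h1 : (𝒰 : Filter ℕ) ≤ atTop := Nat.hyperfilter_le_atTop
    exact h1 ((tendsto_one_div_add_atTop_nhds_zero_nat (𝕜 := ℝ)).eventually
      (gt_mem_nhds (by positivity)))
  obtain ⟨n, hn, hn'⟩ := (hev.and hsmall).exists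
  apply hball n
  have hd0 := hn a₀ (Metric.mem_closedBall_self hρ.le)
  rw [hGz] at hd0
  have hcircle : ∀ w ∈ Metric.sphere a₀ ρ, m / 2 ≤ ‖g n w - g n a₀‖ := by
    intro w hw
    have h1 := hmin w hw
    have h2 := hn w (Metric.sphere_subset_closedBall hw)
    have h3 := dist_triangle4 (G w) (g n w) (g n a₀) z
    rw [dist_comm (g n a₀) z] at h3
    rw [← dist_eq_norm] at h1 ⊢
    linarith
  have hdc : DiffContOnCl ℂ (g n) (Metric.ball a₀ ρ) :=
    ((hg n).1.mono hsub).diffContOnCl_ball (subset_refl _)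
  have hfreq : ∃ᶠ w in 𝓝 a₀, g n w ≠ g n a₀ := by
    intro hcst
    push Not at hcst
    have hgan : AnalyticOnNhd ℂ (g n) U := (hg n).1.analyticOnNhd hU
    have heq := hgan.eqOn_of_preconnected_of_eventuallyEq
      (fun _ _ => analyticAt_const) hUc.isPreconnected (hKU ha₀) hcst
    obtain ⟨x, hx⟩ := NormedSpace.sphere_nonempty (x := a₀).2 hρ.le
    have h1 := hcircle x hx
    rw [heq (hsub (Metric.sphere_subset_closedBall hx))] at h1
    simp at h1; linarith
  have hcover := hdc.ball_subset_image_closedBall hρ hcircle hfreq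
  refine (Metric.ball_subset_ball' ?_).trans (hcover.trans (image_mono hsub))
  linarith

/-! ### Left-escaping points with prescribed itinerary -/

/-- A box of half-width `1/2` about `X ± iπ`, on the inner side of the line `Im = ±π`. -/
def Box (i : Fin 2) (X : ℝ) : Set ℂ :=
  {w | |w.re - X| ≤ 1 / 2 ∧ Real.pi - 1 / 2 ≤ sg i * w.im ∧ sg i * w.im ≤ Real.pi}

lemma Box_isClosed (i : Fin 2) (X : ℝ) : IsClosed (Box i X) := by
  refine (isClosed_le (f := fun w : ℂ => |w.re - X|) (by fun_prop) continuous_const).inter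
    ((isClosed_le (g := fun w : ℂ => sg i * w.im) continuous_const (by fun_prop)).inter
      (isClosed_le (f := fun w : ℂ => sg i * w.im) (by fun_prop) continuous_const))

lemma Box_abs_im {i : Fin 2} {X : ℝ} {w : ℂ} (h : w ∈ Box i X) : |w.im| ≤ Real.pi := by
  obtain ⟨-, h1, h2⟩ := h
  have := Real.pi_gt_three
  rcases sg_cases i with h | h <;> rw [h] at h1 h2 <;> rw [abs_le] <;> constructor <;> linarith

lemma Box_sg_pos {i : Fin 2} {X : ℝ} {w : ℂ} (h : w ∈ Box i X) : 0 < sg i * w.im := by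
  have := Real.pi_gt_three
  linarith [h.2.1]

lemma Box_isCompact (i : Fin 2) (X : ℝ) : IsCompact (Box i X) := by
  refine Metric.isCompact_of_isClosed_isBounded (Box_isClosed i X) ?_
  refine (Metric.isBounded_iff_subset_closedBall 0).2 ⟨|X| + 1 / 2 + Real.pi, fun w hw => ?_⟩
  rw [mem_closedBall_zero_iff]
  have h1 := Complex.norm_le_abs_re_add_abs_im w
  have h2 := Box_abs_im hw
  have h3 := hw.1
  have h4 := abs_sub_abs_le_abs_sub w.re X
  linarith

lemma conj_mem_Box {X : ℝ} {w : ℂ} (h : w ∈ Box 0 X) : starRingEnd ℂ w ∈ Box 1 X := by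
  simpa [Box, sg] using h

/-- Far to the left, `f` expands so strongly that the preimage in the strip `Q 0` of a point of
`S` with real part near `Re f(X + iπ) = X - e^(-X)` is close to `X + iπ`. -/
lemma mem_Box_of_f {w : ℂ} {X : ℝ} (hX : 100 ≤ Real.exp (-X)) (hw : w ∈ Q 0)
    (hre : |(f w).re - (X - Real.exp (-X))| ≤ 1 / 2) (him : |(f w).im| ≤ Real.pi) :
    w ∈ Box 0 X := by
  have hy : w.im ≤ Real.pi := (le_abs_self _).trans (abs_im_le_of_f hw him)
  have hy0 : 0 < w.im := (mem_Q_zero.1 hw).1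
  have hpi := Real.pi_lt_d2
  have hpi' := Real.pi_gt_three
  set T := Real.exp (-X) with hT
  set d := w.re - X with hd
  set E := Real.exp (-w.re) with hE
  have hTE : E * Real.exp d = T := by
    rw [hE, hT, hd, ← Real.exp_add]; ring_nf
  have hET : E = T * Real.exp (-d) := by
    rw [hE, hT, hd, ← Real.exp_add]; ring_nf
  have hEpos : 0 < E := Real.exp_pos _
  rw [f_re] at hre
  rw [f_im] at him
  rw [abs_le] at hre him
  have hxX : w.re = X + d := by rw [hd]; ring
  have hs0 : 0 ≤ Real.sin w.im := Real.sin_nonneg_of_nonneg_of_le_pi hy0.le hy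
  have hEs : E * Real.sin w.im ≤ 2 * Real.pi := by linarith [him.1]
  have hcl := Real.neg_one_le_cos w.im
  have hEc1 : -(E * Real.cos w.im) ≤ E := by nlinarith
  have hd1 : d ≤ 1 / 2 := by
    by_contra hcon
    push Not at hcon
    have h1 := Real.add_one_le_exp d
    have h2 : E * (3 / 2) ≤ T := by rw [← hTE]; gcongr; linarith
    linarith [hre.2]
  have hd2 : -(1 / 2) ≤ d := by
    by_contra hcon
    push Not at hcon
    have h1 := Real.add_one_le_exp (-d)
    have h2 : T * (-d + 1) ≤ E := by rw [hET]; gcongr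
    have h3 : E ≤ |E * Real.cos w.im| + E * Real.sin w.im := by
      rw [abs_mul, abs_of_pos hEpos, ← mul_add]
      have : 1 ≤ |Real.cos w.im| + Real.sin w.im := by
        have h4 := Real.sin_sq_add_cos_sq w.im
        have h5 := sq_abs (Real.cos w.im)
        have h6 := abs_nonneg (Real.cos w.im)
        nlinarith
      nlinarith
    have h4 : |E * Real.cos w.im| ≤ T - d + 1 / 2 := by
      rw [abs_le]; constructor <;> linarith
    nlinarith
  have hE99 : 99 ≤ E := by linarith [hre.2]
  have hcos : Real.cos w.im < 0 := by
    by_contra hcon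
    push Not at hcon
    have := mul_nonneg hEpos.le hcon
    linarith [hre.2]
  have hyhalf : Real.pi / 2 < w.im := by
    by_contra hcon
    push Not at hcon
    linarith [Real.cos_nonneg_of_neg_pi_div_two_le_of_le (x := w.im) (by linarith) hcon]
  refine ⟨abs_le.2 ⟨hd2, hd1⟩, ?_, ?_⟩
  · have h1 := Real.mul_le_sin (x := Real.pi - w.im) (by linarith) (by linarith)
    rw [Real.sin_pi_sub] at h1
    have h2 : 2 / Real.pi * (Real.pi - w.im) * (99 : ℝ) ≤ 2 * Real.pi := by
      calc _ ≤ Real.sin w.im * E := by gcongr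
        _ ≤ _ := by linarith
    have h3 : 99 * (Real.pi - w.im) ≤ Real.pi * Real.pi := by
      have : 2 / Real.pi * (Real.pi - w.im) * 99 = 99 * (Real.pi - w.im) * 2 / Real.pi := by ring
      rw [this, div_le_iff₀ (by linarith)] at h2
      linarith
    simp only [sg, if_true, one_mul]
    nlinarith
  · simpa [sg] using hy

lemma exists_preimage_Box (i j : Fin 2) {X : ℝ} (hX : 100 ≤ Real.exp (-X)) {u : ℂ}
    (hu : u ∈ Box j (X - Real.exp (-X))) : ∃ w ∈ Box i X, f w = u := by
  have hpi := Real.pi_pos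
  have h1 := Box_abs_im hu
  have h2 : u.im ≠ 0 := by
    intro h; have := Box_sg_pos hu; simp [h] at this
  fin_cases i
  · obtain ⟨w, hw, hwu⟩ := f_surj h2 (h1.trans_lt (by linarith))
    exact ⟨w, mem_Box_of_f hX hw (by rw [hwu]; exact hu.1) (by rw [hwu]; exact h1), hwu⟩
  · obtain ⟨w, hw, hwu⟩ := f_surj (u := starRingEnd ℂ u) (by simpa using h2)
      (by simpa using h1.trans_lt (by linarith))
    refine ⟨starRingEnd ℂ w, conj_mem_Box
      (mem_Box_of_f hX hw (by rw [hwu]; simpa using hu.1) (by rw [hwu]; simpa using h1)), ?_⟩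
    rw [f_conj, hwu]; simp

/-- Real parts of the orbit of `-5 ± iπ`, which stays on its horizontal line. -/
noncomputable def xs : ℕ → ℝ
  | 0 => -5
  | k + 1 => xs k - Real.exp (-xs k)

lemma xs_le (k : ℕ) : xs k ≤ -5 - k := by
  induction k with
  | zero => simp [xs]
  | succ k ih =>
    have : 1 ≤ Real.exp (-xs k) := Real.one_le_exp (by
      have : (0 : ℝ) ≤ k := Nat.cast_nonneg k
      linarith)
    simp only [xs]; push_cast; linarith

lemma exp_xs (k : ℕ) : 100 ≤ Real.exp (-xs k) := by
  have h1 : (2.7 : ℝ) < Real.exp 1 := by linarith [Real.exp_one_gt_d9]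
  have h2 : Real.exp 5 = Real.exp 1 ^ 5 := by rw [← Real.exp_nat_mul]; norm_num
  have h3 : (2.7 : ℝ) ^ 5 ≤ Real.exp 1 ^ 5 := pow_le_pow_left₀ (by norm_num) h1.le 5
  have h4 : Real.exp 5 ≤ Real.exp (-xs k) := Real.exp_le_exp.2 (by
    have := xs_le k
    have : (0 : ℝ) ≤ k := Nat.cast_nonneg k
    linarith)
  norm_num at h3
  linarith

lemma exists_finite_orbit (t : ℕ → Fin 2) (m : ℕ) : ∀ k : ℕ, ∃ p : ℂ,
    ∀ j ≤ m, f^[j] p ∈ Box (t (k + j)) (xs (k + j)) := by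
  induction m with
  | zero =>
    intro k
    refine ⟨⟨xs k, sg (t k) * Real.pi⟩, fun j hj => ?_⟩
    obtain rfl : j = 0 := by omega
    simp only [Function.iterate_zero, id, Box, add_zero, mem_ofPred_eq]
    have : sg (t k) * (sg (t k) * Real.pi) = Real.pi := by
      rcases sg_cases (t k) with h | h <;> rw [h] <;> ring
    rw [this]
    norm_num
  | succ m ih =>
    intro k
    obtain ⟨p, hp⟩ := ih (k + 1)
    obtain ⟨w, hw, hwp⟩ := exists_preimage_Box (t k) (t (k + 1)) (exp_xs k) (hp 0 (by omega))
    refine ⟨w, fun j hj => ?_⟩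
    cases j with
    | zero => exact hw
    | succ j =>
      rw [Function.iterate_succ_apply, hwp]
      have := hp j (by omega)
      rwa [show k + 1 + j = k + (j + 1) by omega] at this

/-- Every itinerary is realised by a left-escaping point in a fixed compact box. -/
lemma exists_ray_point (t : ℕ → Fin 2) : ∃ p ∈ Box (t 0) (-5), p ∈ raySet t := by
  let A : ℕ → Set ℂ := fun m => {p | ∀ j ≤ m, f^[j] p ∈ Box (t j) (xs j)}
  have hcl : ∀ m, IsClosed (A m) := by
    intro m
    simp only [A, ofPred_forall]
    exact isClosed_iInter fun j => isClosed_iInter fun _ =>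
      (Box_isClosed _ _).preimage (f_iter_differentiable j).continuous
  have h0 : A 0 ⊆ Box (t 0) (xs 0) := fun p hp => hp 0 le_rfl
  obtain ⟨p, hp⟩ := IsCompact.nonempty_iInter_of_sequence_nonempty_isCompact_isClosed A
    (fun m p hp j hj => hp j (by omega))
    (fun m => by
      obtain ⟨p, hp⟩ := exists_finite_orbit t m 0
      exact ⟨p, fun j hj => by simpa using hp j hj⟩)
    ((Box_isCompact _ _).of_isClosed_subset (hcl 0) h0) hcl
  have hall : ∀ j, f^[j] p ∈ Box (t j) (xs j) := fun j => mem_iInter.1 hp j j le_rfl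
  refine ⟨p, hall 0, fun n => Box_abs_im (hall n), fun n => ?_, ?_⟩
  · have := Box_sg_pos (hall n)
    constructor <;> intro h <;> rw [h] at this <;> simp [sg] at this <;> exact this
  · have hlin : Tendsto (fun n : ℕ => -4 - (n : ℝ)) atTop atBot :=
      tendsto_atBot_add_const_left _ (-4) (tendsto_neg_atTop_atBot.comp tendsto_natCast_atTop_atTop)
    refine tendsto_atBot_mono (fun n => ?_) hlin
    have h1 := (abs_le.1 (hall n).1).2
    have h2 := xs_le n
    linarith

/-! ### Pulling back along an itinerary -/

lemma mem_Q_of_itinerary {z : ℂ} {s : ℕ → Fin 2} (hz : z ∈ Shat) (hs : HasItinerary z s) (n : ℕ) :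
    f^[n] z ∈ Q (s n) := by
  have h1 := abs_le.1 (hz n)
  have h2 := hs n
  have hpi := Real.pi_pos
  generalize s n = i at h2
  fin_cases i
  · exact mem_Q_zero.2 ⟨h2.1 rfl, by linarith⟩
  · exact mem_Q_one.2 ⟨h2.2 rfl, by linarith⟩

/-- The branch of `f^(-n)` following the itinerary `s` and sending `f^n z` back to `z`. -/
lemma exists_pullback {z : ℂ} {s : ℕ → Fin 2} (hz : z ∈ Shat) (hs : HasItinerary z s) (n : ℕ) :
    ∃ Φ : ℂ → ℂ, DifferentiableOn ℂ Φ (Q (s n)) ∧ Φ (f^[n] z) = z ∧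
      (∀ u ∈ Q (s n), f^[n] (Φ u) = u ∧ ∀ k ≤ n, f^[k] (Φ u) ∈ Q (s k)) ∧
      (∀ u ∈ Q (s n), |u.im| ≤ Real.pi → ∀ k ≤ n, |(f^[k] (Φ u)).im| ≤ Real.pi) := by
  induction n with
  | zero =>
    refine ⟨id, differentiableOn_id, rfl, fun u hu => ⟨rfl, fun k hk => ?_⟩,
      fun u hu hu' k hk => ?_⟩
    · obtain rfl : k = 0 := by omega
      exact hu
    · obtain rfl : k = 0 := by omega
      exact hu'
  | succ n ih =>
    obtain ⟨Φ, h1, h2, h3, h4⟩ := ih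
    obtain ⟨φ, hφ, hφ'⟩ := exists_branch (s n)
    have hb : ∀ u ∈ Q (s (n + 1)), φ u ∈ Q (s n) ∧ f (φ u) = u ∧ DifferentiableAt ℂ φ u :=
      fun u hu => hφ u (Q_im hu).1 (Q_im hu).2
    have hlast : ∀ u ∈ Q (s (n + 1)), f^[n + 1] (Φ (φ u)) = u := fun u hu => by
      rw [Function.iterate_succ_apply', (h3 _ (hb u hu).1).1, (hb u hu).2.1]
    refine ⟨Φ ∘ φ, ?_, ?_, fun u hu => ⟨hlast u hu, fun k hk => ?_⟩, fun u hu hu' k hk => ?_⟩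
    · exact h1.comp (fun u hu => (hb u hu).2.2.differentiableWithinAt) (fun u hu => (hb u hu).1)
    · rw [Function.comp, Function.iterate_succ_apply', hφ' _ (mem_Q_of_itinerary hz hs n), h2]
    · rcases Nat.le_succ_iff.1 hk with hk | rfl
      · exact (h3 _ (hb u hu).1).2 k hk
      · rw [Function.comp, hlast u hu]; exact hu
    · rcases Nat.le_succ_iff.1 hk with hk | rfl
      · refine h4 _ (hb u hu).1 (abs_im_le_of_f (hb u hu).1 ?_) k hk
        rw [(hb u hu).2.1]; exact hu'
      · rw [Function.comp, hlast u hu]; exact hu'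

/-! ### The lines `Im = ±π` -/

lemma f_on_line {w : ℂ} (h : |w.im| = Real.pi) :
    |(f w).im| = Real.pi ∧ (f w).re = w.re - Real.exp (-w.re) := by
  rw [f_im, f_re]
  rcases eq_or_eq_neg_of_abs_eq h with h | h <;> rw [h] <;>
    simp [abs_of_pos Real.pi_pos, sub_eq_add_neg]

lemma iter_on_line {w : ℂ} (h : |w.im| = Real.pi) (m : ℕ) :
    |(f^[m] w).im| = Real.pi ∧ (f^[m] w).re ≤ w.re - m * Real.exp (-w.re) := by
  induction m with
  | zero => simpa using h
  | succ m ih =>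
    obtain ⟨h1, h2⟩ := ih
    obtain ⟨h3, h4⟩ := f_on_line h1
    rw [Function.iterate_succ_apply']
    refine ⟨h3, ?_⟩
    have h5 : Real.exp (-w.re) ≤ Real.exp (-(f^[m] w).re) := by
      apply Real.exp_le_exp.2
      have : 0 ≤ m * Real.exp (-w.re) := by positivity
      linarith
    rw [h4]; push_cast; linarith

lemma deriv_iter_succ (m : ℕ) (w : ℂ) :
    deriv (f^[m + 1]) w = (1 - Complex.exp (-(f^[m] w))) * deriv (f^[m]) w := by
  rw [Function.iterate_succ']
  exact ((f_hasStrictDerivAt (f^[m] w)).hasDerivAt.comp w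
    (f_iter_differentiable m w).hasDerivAt).deriv

/-- `f` expands exponentially along the invariant lines. -/
lemma norm_deriv_on_line {w : ℂ} (h : |w.im| = Real.pi) (m : ℕ) :
    (1 + Real.exp (-w.re)) ^ m ≤ ‖deriv (f^[m]) w‖ := by
  induction m with
  | zero => simp
  | succ m ih =>
    obtain ⟨h1, h2⟩ := iter_on_line h m
    rw [deriv_iter_succ, norm_mul, pow_succ, mul_comm]
    have h5 : Real.exp (-w.re) ≤ Real.exp (-(f^[m] w).re) := by
      apply Real.exp_le_exp.2
      have : 0 ≤ m * Real.exp (-w.re) := by positivity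
      linarith
    have h6 : (1 - Complex.exp (-(f^[m] w))).re = 1 + Real.exp (-(f^[m] w).re) := by
      rcases eq_or_eq_neg_of_abs_eq h1 with h | h <;> simp [Complex.exp_re, h]
    have h7 := Complex.re_le_norm (1 - Complex.exp (-(f^[m] w)))
    rw [h6] at h7
    gcongr
    linarith

lemma tendsto_of_line {w : ℂ} {n : ℕ} (h : |(f^[n] w).im| = Real.pi) :
    Tendsto (fun k : ℕ => (f^[k] w).re) atTop atBot := by
  rw [← tendsto_add_atTop_iff_nat n]
  set v := f^[n] w with hv
  have h1 : Tendsto (fun m : ℕ => v.re - m * Real.exp (-v.re)) atTop atBot := by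
    simp_rw [sub_eq_add_neg]
    refine tendsto_atBot_add_const_left _ _ (tendsto_neg_atTop_atBot.comp ?_)
    exact tendsto_natCast_atTop_atTop.atTop_mul_const (Real.exp_pos _)
  refine tendsto_atBot_mono (fun m => ?_) h1
  rw [Function.iterate_add_apply]
  exact (iter_on_line h m).2

/-- No neighbourhood of a frontier point follows the strips `Q (s k)` forever: it would contain a
preimage of a point of `Im = ±π`, where the derivatives of the iterates are unbounded. -/
lemma exists_escape {z : ℂ} {s : ℕ → Fin 2} (hz : z ∈ Shat) (hzi : z ∉ interior Shat) {r : ℝ}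
    (hr : 0 < r) : ∃ w ∈ Metric.ball z r, ∃ k, f^[k] w ∉ Q (s k) := by
  by_contra hcon
  push Not at hcon
  obtain ⟨w, hw, hwS⟩ : ∃ w ∈ Metric.ball z (r / 2), w ∉ Shat := by
    by_contra h
    push Not at h
    exact hzi (mem_interior_iff_mem_nhds.2
      (mem_of_superset (Metric.ball_mem_nhds z (half_pos hr)) h))
  obtain ⟨k, hk⟩ : ∃ k, Real.pi < |(f^[k] w).im| := by
    by_contra h
    push Not at h
    exact hwS h
  have hcont : Continuous fun x => |(f^[k] x).im| :=
    (Complex.continuous_im.comp (f_iter_differentiable k).continuous).abs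
  obtain ⟨v, hv, hvk⟩ := (convex_ball z (r / 2)).isPreconnected.intermediate_value
    (Metric.mem_ball_self (half_pos hr)) hw hcont.continuousOn ⟨hz k, hk.le⟩
  simp only at hvk
  have hsub : Metric.closedBall v (r / 4) ⊆ Metric.ball z r := by
    intro x hx
    rw [Metric.mem_closedBall] at hx
    rw [Metric.mem_ball] at hv ⊢
    linarith [dist_triangle x v z]
  have hvz : v ∈ Metric.ball z r := hsub (Metric.mem_closedBall_self (by positivity))
  have hd : ∀ m, deriv (f^[m]) v ≠ 0 := by
    intro m
    induction m with
    | zero => simp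
    | succ m ih =>
      rw [deriv_iter_succ]
      have := Q_im (hcon v hvz m)
      exact mul_ne_zero (one_sub_exp_ne_zero this.1 this.2) ih
  have hbound : ∀ m, ‖deriv (f^[m]) v‖ ≤ Real.exp (4 * Real.pi) / (r / 4) := fun m =>
    norm_deriv_le_of_strip (by positivity) (f_iter_differentiable m).differentiableOn
      (fun x hx => (Q_im (hcon x (hsub hx) m)).2.le)
  have hchain : ∀ m, deriv (f^[m + k]) v = deriv (f^[m]) (f^[k] v) * deriv (f^[k]) v := by
    intro m
    rw [Function.iterate_add]
    exact ((f_iter_differentiable m _).hasDerivAt.comp v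
      (f_iter_differentiable k v).hasDerivAt).deriv
  obtain ⟨m, hm⟩ := pow_unbounded_of_one_lt
    (Real.exp (4 * Real.pi) / (r / 4) / ‖deriv (f^[k]) v‖)
    (by linarith [Real.exp_pos (-(f^[k] v).re)] : 1 < 1 + Real.exp (-(f^[k] v).re))
  have h1 := hm.trans_le (norm_deriv_on_line hvk m)
  rw [div_lt_iff₀ (norm_pos_iff.2 (hd k)), ← norm_mul, ← hchain] at h1
  linarith [hbound (m + k)]

/-! ### Recurrence to a compact set -/

/-- The right half-strip `Re > 0, |Im| < π/2` is forward invariant. -/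
lemma right_half_strip_subset : {w : ℂ | 0 < w.re ∧ |w.im| < Real.pi / 2} ⊆ interior Shat := by
  have hpi := Real.pi_pos
  apply interior_maximal
  · intro w hw n
    suffices h : 0 < (f^[n] w).re ∧ |(f^[n] w).im| < Real.pi / 2 by linarith [h.2]
    induction n with
    | zero => exact hw
    | succ n ih =>
      rw [Function.iterate_succ_apply']
      generalize f^[n] w = v at ih
      obtain ⟨h1, h2⟩ := ih
      have h3 := abs_lt.1 h2
      have hc : 0 < Real.cos v.im := Real.cos_pos_of_mem_Ioo ⟨by linarith, by linarith⟩
      have he : 0 < Real.exp (-v.re) := Real.exp_pos _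
      have he1 : Real.exp (-v.re) < 1 := Real.exp_lt_one_iff.2 (by linarith)
      refine ⟨by rw [f_re]; positivity, ?_⟩
      rw [f_im, abs_lt]
      rcases le_or_gt 0 v.im with hy | hy
      · have hs := Real.sin_le hy
        have hs0 := Real.sin_nonneg_of_nonneg_of_le_pi hy (by linarith)
        have : Real.exp (-v.re) * Real.sin v.im ≤ Real.sin v.im :=
          mul_le_of_le_one_left hs0 he1.le
        have := mul_nonneg he.le hs0
        constructor <;> linarith
      · have hs := Real.sin_le (x := -v.im) (by linarith)
        have hs0 := Real.sin_nonneg_of_nonneg_of_le_pi (x := -v.im) (by linarith) (by linarith)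
        rw [Real.sin_neg] at hs hs0
        have : Real.exp (-v.re) * -Real.sin v.im ≤ -Real.sin v.im :=
          mul_le_of_le_one_left hs0 he1.le
        have := mul_nonneg he.le hs0
        constructor <;> linarith
  · exact (isOpen_lt continuous_const Complex.continuous_re).inter
      (isOpen_lt Complex.continuous_im.abs continuous_const)

lemma mem_interior_of_iter {z : ℂ} {n : ℕ} (hlt : ∀ k < n, |(f^[k] z).im| < Real.pi)
    (h : f^[n] z ∈ interior Shat) : z ∈ interior Shat := by
  rw [mem_interior_iff_mem_nhds]
  have h1 : ∀ᶠ w in 𝓝 z, f^[n] w ∈ Shat :=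
    (f_iter_differentiable n).continuous.continuousAt.eventually
      (mem_interior_iff_mem_nhds.1 h)
  have h2 : ∀ᶠ w in 𝓝 z, ∀ k ∈ Finset.range n, |(f^[k] w).im| < Real.pi := by
    rw [Filter.eventually_all_finset]
    intro k hk
    have hcont : Continuous fun x => |(f^[k] x).im| :=
      (Complex.continuous_im.comp (f_iter_differentiable k).continuous).abs
    exact hcont.continuousAt.eventually (gt_mem_nhds (hlt k (Finset.mem_range.1 hk)))
  filter_upwards [h1, h2] with w hw1 hw2 k
  rcases lt_or_ge k n with hk | hk
  · exact (hw2 k (Finset.mem_range.2 hk)).le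
  · have := hw1 (k - n)
    rwa [← Function.iterate_add_apply, Nat.sub_add_cancel hk] at this

lemma real_subset_interior {w : ℂ} (h : w.im = 0) : w ∈ interior Shat := by
  have hpi := Real.pi_pos
  apply mem_interior_of_iter (n := 1)
  · intro k hk
    obtain rfl : k = 0 := by omega
    simpa [h] using hpi
  · apply right_half_strip_subset
    simp only [Function.iterate_one]
    constructor
    · rw [f_re, h]
      have := Real.add_one_le_exp (-w.re)
      simp; linarith
    · rw [f_im, h]; simpa using hpi

/-- For positive real part and `π/2 ≤ |Im| < π`, one step of `f` moves left by at most `1` and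
decreases `Re + |Im|` by at least `e^(-Re)`. -/
lemma step_left {v : ℂ} (h0 : 0 < v.re) (h1 : Real.pi / 2 ≤ |v.im|) (h2 : |v.im| < Real.pi) :
    (f v).re ≤ v.re ∧ v.re - 1 ≤ (f v).re ∧
      (f v).re + |(f v).im| ≤ v.re + |v.im| - Real.exp (-v.re) := by
  have hpi := Real.pi_pos
  have key : ∀ v : ℂ, 0 < v.re → Real.pi / 2 ≤ v.im → v.im < Real.pi →
      (f v).re ≤ v.re ∧ v.re - 1 ≤ (f v).re ∧
      (f v).re + |(f v).im| ≤ v.re + |v.im| - Real.exp (-v.re) := by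
    intro v h0 h1 h2
    have he : 0 < Real.exp (-v.re) := Real.exp_pos _
    have he1 : Real.exp (-v.re) < 1 := Real.exp_lt_one_iff.2 (by linarith)
    have hc : Real.cos v.im ≤ 0 := Real.cos_nonpos_of_pi_div_two_le_of_le h1 (by linarith)
    have hc1 := Real.neg_one_le_cos v.im
    have hs : 0 < Real.sin v.im := Real.sin_pos_of_pos_of_lt_pi (by linarith) h2
    have hs1 := Real.sin_le (x := v.im) (by linarith)
    have hcs : 1 ≤ Real.sin v.im - Real.cos v.im := by
      nlinarith [Real.sin_sq_add_cos_sq v.im]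
    have h3 : 0 ≤ (f v).im := by rw [f_im]; nlinarith
    rw [abs_of_nonneg h3, abs_of_pos (by linarith : 0 < v.im), f_re, f_im]
    refine ⟨by nlinarith, by nlinarith, by nlinarith⟩
  rcases le_abs'.1 h1 with h | h
  · have := key (starRingEnd ℂ v) (by simpa using h0) (by simp; linarith)
      (by simpa using (abs_lt.1 h2).1 |> fun h => by linarith)
    rw [f_conj] at this
    simpa using this
  · exact key v h0 h ((le_abs_self _).trans_lt h2)

/-- The orbit of a point that neither enters the interior of `Shat` nor escapes to the left comes
back infinitely often to a compact set avoiding the real axis. -/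
lemma recurrence {a : ℕ → ℂ} (hstep : ∀ n, a (n + 1) = f (a n))
    (hlt : ∀ n, |(a n).im| < Real.pi) (hnint : ∀ n, a n ∉ interior Shat)
    (hesc : ¬ Tendsto (fun n => (a n).re) atTop atBot) :
    ∃ M δ : ℝ, 0 < δ ∧ ∀ N, ∃ n ≥ N, -M ≤ (a n).re ∧ (a n).re ≤ 0 ∧ δ ≤ |(a n).im| := by
  have hge : ∀ n, 0 < (a n).re → Real.pi / 2 ≤ |(a n).im| := by
    intro n hn
    by_contra h
    push Not at h
    exact hnint n (right_half_strip_subset ⟨hn, h⟩)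
  have hreturn : ∀ n, ∃ m, (a (n + m)).re ≤ 0 := by
    intro n
    by_contra h
    push Not at h
    have hmono : ∀ m, (a (n + m)).re ≤ (a n).re := by
      intro m
      induction m with
      | zero => simp
      | succ m ih =>
        have := (step_left (h m) (hge _ (h m)) (hlt _)).1
        rw [← hstep] at this
        exact this.trans ih
    have hdec : ∀ m : ℕ, (a (n + m)).re + |(a (n + m)).im| ≤
        (a n).re + |(a n).im| - m * Real.exp (-(a n).re) := by
      intro m
      induction m with
      | zero => simp
      | succ m ih =>
        have h1 := (step_left (h m) (hge _ (h m)) (hlt _)).2.2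
        rw [← hstep] at h1
        have h2 : Real.exp (-(a n).re) ≤ Real.exp (-(a (n + m)).re) :=
          Real.exp_le_exp.2 (by linarith [hmono m])
        rw [← add_assoc]; push_cast; linarith
    obtain ⟨m, hm⟩ := exists_nat_gt (((a n).re + |(a n).im|) / Real.exp (-(a n).re))
    rw [div_lt_iff₀ (Real.exp_pos _)] at hm
    have := hdec m
    linarith [h m, abs_nonneg (a (n + m)).im]
  obtain ⟨M₀, hM₀⟩ : ∃ M₀ : ℝ, ∃ᶠ n in atTop, -M₀ ≤ (a n).re := by
    rw [tendsto_atBot] at hesc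
    push Not at hesc
    obtain ⟨b, hb⟩ := hesc
    refine ⟨-b, hb.mono fun n hn => ?_⟩
    rw [neg_neg]; exact hn.le
  set M := max M₀ 1 with hM
  have hM1 : 1 ≤ M := le_max_right _ _
  have hM2 : M₀ ≤ M := le_max_left _ _
  have hfreq : ∀ N, ∃ n ≥ N, -M ≤ (a n).re ∧ (a n).re ≤ 0 := by
    intro N
    obtain ⟨n, hn, hn'⟩ := frequently_atTop.1 hM₀ N
    rcases le_or_gt (a n).re 0 with h | h
    · exact ⟨n, hn, by linarith, h⟩
    · classical
      -- the first later time with nonpositive real part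
      have hm := Nat.find_spec (hreturn n)
      have hmin : ∀ k < Nat.find (hreturn n), ¬ (a (n + k)).re ≤ 0 :=
        fun k hk => Nat.find_min (hreturn n) hk
      generalize Nat.find (hreturn n) = m at hm hmin
      cases m with
      | zero => simp at hm; linarith
      | succ m =>
        have h1 := not_le.1 (hmin m (by omega))
        have h2 := (step_left h1 (hge _ h1) (hlt _)).2.1
        rw [← hstep] at h2
        rw [← add_assoc] at hm
        exact ⟨n + m + 1, by omega, by linarith, hm⟩
  -- a uniform neighbourhood of the real segment `[-M, 0]` lies in the interior
  let σ : Set ℂ := (fun x : ℝ => (x : ℂ)) '' Icc (-M) 0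
  have hσ : IsCompact σ := isCompact_Icc.image Complex.continuous_ofReal
  obtain ⟨δ, hδ, hsub⟩ := hσ.exists_cthickening_subset_open isOpen_interior (t := interior Shat)
    (by rintro _ ⟨x, -, rfl⟩; exact real_subset_interior (by simp))
  refine ⟨M, δ, hδ, fun N => ?_⟩
  obtain ⟨n, hn, h1, h2⟩ := hfreq N
  refine ⟨n, hn, h1, h2, ?_⟩
  by_contra h
  push Not at h
  apply hnint n
  have hmem : ((a n).re : ℂ) ∈ σ := ⟨(a n).re, ⟨h1, h2⟩, rfl⟩
  refine hsub (Metric.closedBall_subset_cthickening hmem δ ?_)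
  rw [mem_closedBall_iff_norm]
  have h3 := Complex.norm_le_abs_re_add_abs_im (a n - ((a n).re : ℂ))
  simp at h3
  linarith

/-! ### Conclusion -/

/-- every point of the frontier of Ŝ whose orbit avoids ℝ lies in the closure of
the set of left-escaping points sharing its itinerary. -/
theorem frontier_point_in_closure_of_ray
    (z : ℂ) (hz : z ∈ frontier Shat) (s : ℕ → Fin 2) (hs : HasItinerary z s) :
    z ∈ closure (raySet s) := by
  have hcl : IsClosed Shat := by
    have : Shat = ⋂ n : ℕ, {z : ℂ | |(f^[n] z).im| ≤ Real.pi} := by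
      ext; simp [Shat]
    rw [this]
    exact isClosed_iInter fun n => isClosed_le
      (Complex.continuous_im.comp (f_iter_differentiable n).continuous).abs continuous_const
  have hpi := Real.pi_gt_three
  have hzS : z ∈ Shat := hcl.frontier_subset hz
  have hzi : z ∉ interior Shat := hz.2
  by_cases hesc : Tendsto (fun n : ℕ => (f^[n] z).re) atTop atBot
  · exact subset_closure ⟨hzS, hs, hesc⟩
  have hlt : ∀ n, |(f^[n] z).im| < Real.pi := fun n =>
    lt_of_le_of_ne (hzS n) fun h => hesc (tendsto_of_line h)
  obtain ⟨M₀, δ₀, hδ₀, hrec⟩ := recurrence (a := fun n => f^[n] z)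
    (fun n => Function.iterate_succ_apply' f n z) hlt
    (fun n h => hzi (mem_interior_of_iter (fun k _ => hlt k) h)) hesc
  let M := max M₀ 6
  let δ := min δ₀ 1
  have hδ : 0 < δ := lt_min hδ₀ one_pos
  -- compact sets containing both the returns of `f^n z` and the boxes about `-5 ± iπ`
  let K : Fin 2 → Set ℂ := fun i => Icc (-M) 0 ×ℂ (fun y => sg i * y) ⁻¹' Icc δ Real.pi
  have hK : ∀ i, IsCompact (K i) := by
    intro i
    refine isCompact_Icc.reProdIm ?_
    rcases sg_cases i with h | h
    · simpa [h] using isCompact_Icc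
    · have : (fun y : ℝ => sg i * y) ⁻¹' Icc δ Real.pi = Icc (-Real.pi) (-δ) := by
        ext y; simp only [h, mem_preimage, mem_Icc]; constructor <;> rintro ⟨_, _⟩ <;>
          constructor <;> linarith
      rw [this]; exact isCompact_Icc
  have hKQ : ∀ i, K i ⊆ Q i := by
    rintro i w ⟨-, h1, h2⟩
    exact ⟨hδ.trans_le h1, lt_of_le_of_lt h2 (by linarith)⟩
  rw [Metric.mem_closure_iff]
  intro ε hε
  choose r hr hr' using fun i => strip_alternative (Q_isOpen i) (Q_convex i) (hK i) (hKQ i) z hε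
  obtain ⟨w, hw, k, hwk⟩ := exists_escape (s := s) hzS hzi (lt_min (hr 0) (hr 1))
  obtain ⟨n, hn, h1, h2, h3⟩ := hrec k
  obtain ⟨Φ, hΦd, hΦz, hΦ, hΦpi⟩ := exists_pullback hzS hs n
  obtain ⟨p, hpB, hpS, hps, hpe⟩ := exists_ray_point fun j => s (n + j)
  simp only [add_zero] at hpB
  have hpK : p ∈ K (s n) := by
    have := abs_le.1 hpB.1
    have hM6 : 6 ≤ M := le_max_right _ _
    have hδ1 : δ ≤ 1 := min_le_right _ _
    exact ⟨⟨by linarith, by linarith⟩, le_trans (by linarith) hpB.2.1, hpB.2.2⟩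
  have hQz := mem_Q_of_itinerary hzS hs n
  have hzK : f^[n] z ∈ K (s n) := by
    have hM0 : M₀ ≤ M := le_max_left _ _
    have habs : |(f^[n] z).im| = sg (s n) * (f^[n] z).im := by
      have := hQz.1
      rcases sg_cases (s n) with h | h <;> rw [h] at this ⊢
      · rw [abs_of_pos (by linarith)]; ring
      · rw [abs_of_neg (by linarith)]; ring
    refine ⟨⟨by linarith, h2⟩, ?_, ?_⟩
    · show δ ≤ sg (s n) * (f^[n] z).im
      rw [← habs]; exact (min_le_left _ _).trans h3
    · show sg (s n) * (f^[n] z).im ≤ Real.pi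
      rw [← habs]; exact hzS n
  have hstrip : StripFun (Q (s n)) Φ :=
    ⟨hΦd, fun u hu => (Q_im ((hΦ u hu).2 0 (Nat.zero_le n))).2.le⟩
  rcases hr' (s n) Φ hstrip _ hzK hΦz p hpK with hclose | hcover
  · refine ⟨Φ p, ?_, by rwa [dist_comm, dist_eq_norm]⟩
    have hpQ := hKQ _ hpK
    have hshift : ∀ j, f^[j + n] (Φ p) = f^[j] p := fun j => by
      rw [Function.iterate_add_apply, (hΦ p hpQ).1]
    refine ⟨fun j => ?_, fun j => ?_, ?_⟩
    · rcases le_total j n with hj | hj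
      · exact hΦpi p hpQ (Box_abs_im hpB) j hj
      · obtain ⟨i, rfl⟩ := Nat.exists_eq_add_of_le' hj
        rw [hshift]; exact hpS i
    · rcases le_total j n with hj | hj
      · have := ((hΦ p hpQ).2 j hj).1
        constructor <;> intro h <;> rw [h] at this <;> simp [sg] at this <;> exact this
      · obtain ⟨i, rfl⟩ := Nat.exists_eq_add_of_le' hj
        rw [hshift, add_comm i n]; exact hps i
    · rw [← tendsto_add_atTop_iff_nat n]
      simpa only [hshift] using hpe
  · exfalso
    have hwr : w ∈ Metric.ball z (r (s n)) := by
      refine Metric.ball_subset_ball ?_ hw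
      generalize s n = i
      fin_cases i
      · exact min_le_left _ _
      · exact min_le_right _ _
    obtain ⟨u, hu, rfl⟩ := hcover hwr
    exact hwk ((hΦ u hu).2 k hn)
end
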